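/- Let A be a unital C*-algebra, B ⊆ A a unital C*-subalgebra, X a selfadjoint element of A, a₀ a selfadjoint element of B, and η : A → B a continuous completely positive linear map. Let H⁺(B) = {b ∈ B : Im b is strictly positive} and suppose ω : H⁺(B) → H⁺(B) satisfies the subordination equation ω(b) = b + a₀ + η((X − ω(b))⁻¹) for all b ∈ H⁺(B). Then for every strictly positive q ∈ B the map u ↦ Re ω(u + iq) is a bijection from the set of selfadjoint elements of B onto itself. -/

import Mathlib

noncomputable section

open Filter Topology
open scoped ComplexOrder

/-- The real part `(b + b*)/2` of an element of a complex star algebra. -/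
def reP {A : Type*} [NonUnitalRing A] [StarRing A] [Module ℂ A] (b : A) : A :=
  (2 : ℂ)⁻¹ • (b + star b)

/-- The imaginary part `(b - b*)/(2i)` of an element of a complex star algebra. -/
def imP {A : Type*} [NonUnitalRing A] [StarRing A] [Module ℂ A] (b : A) : A :=
  (2 * Complex.I)⁻¹ • (b - star b)

/-- An element of a C*-algebra is strictly positive if it is selfadjoint, positive
(with respect to the canonical order coming from the star-ordered ring structure)
and invertible. -/
def SPos {A : Type*} [Ring A] [StarRing A] [PartialOrder A] (v : A) : Prop :=
  IsSelfAdjoint v ∧ 0 ≤ v ∧ IsUnit v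

/-!
Write `w = s + i v` and `y = X - s`. The imaginary part of `w = b + η((X - w)⁻¹)` reads
`v = q + η((v + y v⁻¹ y)⁻¹)` with `q = Im b`. Both inversion and positive maps are nonexpansive for
the Thompson metric, and adding `q` contracts it on bounded sets, so `v` exists and is determined
by `s`; then `b = w - η((X - w)⁻¹)` is determined as well. This gives injectivity, and for every `s`
a point `b` whose subordination equation has a solution with real part `s`.

Surjectivity requires `ω(b)` to be that solution. The difference `d` of two solutions `w`, `w'` for
the same `b` satisfies `d = η(G d H)` with `G = (X - w)⁻¹` and `H = (X - w')⁻¹`, so that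
`[[0, d], [d*, 0]]` is fixed by the positive map `Ψ` that conjugates by `diag(G, H*)` and then
applies `η` entrywise to `2 × 2` matrices. The imaginary parts give `D = diag(q, q) + Ψ(D)` for
`D = diag(Im w, Im w')`, so `Ψ(D) ≤ r D` with `r < 1`, which leaves no nonzero selfadjoint fixed
point.
-/

open scoped ComplexStarModule Ring

section FixedPoint

variable {E : Type*} [MetricSpace E] [CompleteSpace E]

theorem existsUnique_isFixedPt_of_dist_iterate_le {s : Set E} (hs : IsClosed s)
    (hne : s.Nonempty) {F : E → E} (hF : Set.MapsTo F s s) (hcont : ContinuousOn F s) {C r : ℝ}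
    (hr₀ : 0 ≤ r) (hr : r < 1)
    (hdist : ∀ n, ∀ x ∈ s, ∀ y ∈ s, dist (F^[n] x) (F^[n] y) ≤ C * r ^ n) :
    ∃! x, x ∈ s ∧ Function.IsFixedPt F x := by
  obtain ⟨x₀, hx₀⟩ := hne
  have hmem (n : ℕ) : F^[n] x₀ ∈ s := hF.iterate n hx₀
  have hcauchy : CauchySeq fun n => F^[n] x₀ :=
    cauchySeq_of_le_geometric r C hr fun n => hdist n x₀ hx₀ (F x₀) (hF hx₀)
  obtain ⟨x, hx⟩ := cauchySeq_tendsto_of_complete hcauchy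
  have hxs : x ∈ s := hs.mem_of_tendsto hx (Eventually.of_forall hmem)
  have hFx : Tendsto (fun n => F (F^[n] x₀)) atTop (𝓝 (F x)) :=
    (hcont x hxs).tendsto.comp (tendsto_nhdsWithin_iff.mpr ⟨hx, Eventually.of_forall hmem⟩)
  have hfix : Function.IsFixedPt F x := tendsto_nhds_unique
    (by simpa only [Function.iterate_succ_apply'] using hFx)
    ((tendsto_add_atTop_iff_nat 1).mpr hx)
  refine ⟨x, ⟨hxs, hfix⟩, ?_⟩
  rintro y ⟨hys, hy⟩
  have hle (n : ℕ) : dist y x ≤ C * r ^ n := by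
    simpa only [hy.iterate n |>.eq, hfix.iterate n |>.eq] using hdist n y hys x hxs
  have hlim : Tendsto (fun n => C * r ^ n) atTop (𝓝 0) := by
    simpa only [mul_zero] using (tendsto_pow_atTop_nhds_zero_of_lt_one hr₀ hr).const_mul C
  exact dist_le_zero.mp (ge_of_tendsto' hlim hle)

end FixedPoint

section Ring

variable {A : Type*}

theorem ringInverse_eq_of_mul_eq_one [MonoidWithZero A] {a b : A} (ha : IsUnit a)
    (h : a * b = 1) : a⁻¹ʳ = b := by
  rw [← mul_one a⁻¹ʳ, Ring.inverse_mul_eq_iff_eq_mul a 1 b ha, h]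

theorem ringInverse_smul {𝕜 : Type*} [Field 𝕜] [Ring A] [Algebra 𝕜 A] {c : 𝕜} (hc : c ≠ 0) {a : A}
    (ha : IsUnit a) : (c • a)⁻¹ʳ = c⁻¹ • a⁻¹ʳ := by
  refine ringInverse_eq_of_mul_eq_one (ha.smul (Units.mk0 c hc)) ?_
  rw [smul_mul_smul_comm, mul_inv_cancel₀ hc, Ring.mul_inverse_cancel a ha, one_smul]

/-- For selfadjoint `y` and strictly positive `v` this is the inverse of the imaginary part
of `(y - i v)⁻¹`; for scalars it is `(y² + v²) / v`. -/
def resolventDenom [Ring A] (y v : A) : A :=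
  v + y * v⁻¹ʳ * y

theorem sub_smul_mul_inverse_mul_add_smul [Ring A] [Algebra ℂ A] {c : ℂ} (hc : c * c = -1) (y : A)
    {v : A} (hv : IsUnit v) : (y - c • v) * v⁻¹ʳ * (y + c • v) = resolventDenom y v := by
  have hsq : c • c • v = -v := by rw [smul_smul, hc, neg_one_smul]
  simp only [resolventDenom, sub_mul, mul_add, smul_mul_assoc, mul_smul_comm,
    Ring.mul_inverse_cancel v hv, Ring.inverse_mul_cancel_right _ _ hv, one_mul, smul_sub, hsq]
  abel

theorem isUnit_sub_I_smul_of_isUnit_resolventDenom [Ring A] [Algebra ℂ A] {y v : A} (hv : IsUnit v)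
    (h : IsUnit (resolventDenom y v)) : IsUnit (y - Complex.I • v) := by
  have hright := sub_smul_mul_inverse_mul_add_smul Complex.I_mul_I y hv
  have hleft := sub_smul_mul_inverse_mul_add_smul (c := -Complex.I) (by simp) y hv
  rw [neg_smul, sub_neg_eq_add, ← sub_eq_add_neg] at hleft
  refine isUnit_iff_exists_and_exists.mpr
    ⟨⟨v⁻¹ʳ * (y + Complex.I • v) * (resolventDenom y v)⁻¹ʳ, ?_⟩,
      ⟨(resolventDenom y v)⁻¹ʳ * ((y + Complex.I • v) * v⁻¹ʳ), ?_⟩⟩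
  · rw [← mul_assoc, ← mul_assoc, hright, Ring.mul_inverse_cancel _ h]
  · rw [mul_assoc, hleft, Ring.inverse_mul_cancel _ h]

end Ring

section Order

variable {A : Type*} [CStarAlgebra A] [PartialOrder A] [StarOrderedRing A]

theorem exists_le_smul_of_isStrictlyPositive {q x : A} (hq : IsStrictlyPositive q)
    (hx : IsSelfAdjoint x) : ∃ σ : ℝ, 1 ≤ σ ∧ x ≤ σ • q := by
  obtain ⟨r, hr, hrq⟩ : ∃ r : ℝ, 0 < r ∧ algebraMap ℝ A r ≤ q := by
    rcases subsingleton_or_nontrivial A with hA | hA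
    · exact ⟨1, one_pos, (Subsingleton.elim _ _).le⟩
    exact (CFC.exists_pos_algebraMap_le_iff hq.isSelfAdjoint).mpr fun _ h => hq.spectrum_pos h
  refine ⟨1 + ‖x‖ / r, le_add_of_nonneg_right (by positivity), ?_⟩
  calc x ≤ algebraMap ℝ A ‖x‖ := hx.le_algebraMap_norm_self
    _ = (‖x‖ / r) • algebraMap ℝ A r := by
      rw [Algebra.algebraMap_eq_smul_one, Algebra.algebraMap_eq_smul_one, smul_smul,
        div_mul_cancel₀ _ hr.ne']
    _ ≤ (‖x‖ / r) • q := smul_le_smul_of_nonneg_left hrq (by positivity)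
    _ ≤ (1 + ‖x‖ / r) • q := smul_le_smul_of_nonneg_right (by linarith) hq.nonneg

theorem nonpos_of_positive_map_fixed {Ψ : A →ₚ[ℂ] A} {D x : A} (hD : IsStrictlyPositive D)
    {r : ℝ} (hr₀ : 0 ≤ r) (hr : r < 1) (hΨ : Ψ D ≤ r • D) (hx : IsSelfAdjoint x)
    (hfix : Ψ x = x) : x ≤ 0 := by
  obtain ⟨τ, hτ, hxτ⟩ := exists_le_smul_of_isStrictlyPositive hD hx
  have hle (n : ℕ) : x ≤ (r ^ n * τ) • D := by
    induction n with
    | zero => simpa only [pow_zero, one_mul] using hxτ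
    | succ n ih =>
      calc x = Ψ x := hfix.symm
        _ ≤ Ψ ((r ^ n * τ) • D) := OrderHomClass.mono Ψ ih
        _ = (r ^ n * τ) • Ψ D := PositiveLinearMap.map_smul_of_tower Ψ _ _
        _ ≤ (r ^ n * τ) • r • D := smul_le_smul_of_nonneg_left hΨ (by positivity)
        _ = (r ^ (n + 1) * τ) • D := by rw [smul_smul]; ring_nf
  have hlim : Tendsto (fun n : ℕ => (r ^ n * τ) • D) atTop (𝓝 0) := by
    simpa only [zero_mul, zero_smul] using
      ((tendsto_pow_atTop_nhds_zero_of_lt_one hr₀ hr).mul_const τ).smul_const D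
  exact ge_of_tendsto' hlim hle

theorem eq_zero_of_positive_map_fixed {Ψ : A →ₚ[ℂ] A} {D q x : A} (hD : IsStrictlyPositive D)
    (hq : IsStrictlyPositive q) (hΨ : D = q + Ψ D) (hx : IsSelfAdjoint x) (hfix : Ψ x = x) :
    x = 0 := by
  obtain ⟨σ, hσ, hDσ⟩ := exists_le_smul_of_isStrictlyPositive hq hD.isSelfAdjoint
  have hσ₀ : 0 < σ := one_pos.trans_le hσ
  have hcontr : Ψ D ≤ (1 - σ⁻¹) • D := by
    rw [sub_smul, one_smul, le_sub_iff_add_le, ← le_sub_iff_add_le', sub_eq_of_eq_add hΨ]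
    exact (inv_smul_le_iff_of_pos hσ₀).mpr hDσ
  have hr₀ : 0 ≤ 1 - σ⁻¹ := sub_nonneg.mpr (inv_le_one_of_one_le₀ hσ)
  have hr : 1 - σ⁻¹ < 1 := sub_lt_self 1 (inv_pos.mpr hσ₀)
  refine le_antisymm (nonpos_of_positive_map_fixed hD hr₀ hr hcontr hx hfix) ?_
  exact neg_nonpos.mp
    (nonpos_of_positive_map_fixed hD hr₀ hr hcontr hx.neg (by rw [map_neg, hfix]))

/-- `ThompsonLE t v w` says that the positive elements `v` and `w` are at distance at most
`log t` in the Thompson metric. -/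
def ThompsonLE {E : Type*} [LE E] [SMul ℝ E] (t : ℝ) (v w : E) : Prop :=
  v ≤ t • w ∧ w ≤ t • v

namespace ThompsonLE

theorem map {E E' F : Type*} [AddCommGroup E] [Module ℂ E] [Preorder E] [AddCommGroup E']
    [Module ℂ E'] [Preorder E'] [FunLike F E E'] [LinearMapClass F ℂ E E']
    [OrderHomClass F E E'] (φ : F) {t : ℝ} {v w : E} (h : ThompsonLE t v w) :
    ThompsonLE t (φ v) (φ w) := by
  have hsmul (x : E) : φ (t • x) = t • φ x := LinearMap.map_smul_of_tower (φ : E →ₗ[ℂ] E') t x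
  exact ⟨(OrderHomClass.mono φ h.1).trans_eq (hsmul w),
    (OrderHomClass.mono φ h.2).trans_eq (hsmul v)⟩

section OrderedModule

variable {E : Type*} [AddCommGroup E] [PartialOrder E] [Module ℝ E] [PosSMulMono ℝ E]

theorem of_mem_Icc {σ : ℝ} {q M v w : E} (hσ : 0 ≤ σ) (hM : M ≤ σ • q)
    (hv : v ∈ Set.Icc q M) (hw : w ∈ Set.Icc q M) : ThompsonLE σ v w :=
  ⟨hv.2.trans (hM.trans (smul_le_smul_of_nonneg_left hw.1 hσ)),
    hw.2.trans (hM.trans (smul_le_smul_of_nonneg_left hv.1 hσ))⟩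

theorem const_add [IsOrderedAddMonoid E] {ε σ : ℝ} {q v w : E} (hε : 0 ≤ ε) (hσ : 0 < σ)
    (h : ThompsonLE (1 + ε) v w) (hv : q + v ≤ σ • q) (hw : q + w ≤ σ • q) :
    ThompsonLE (1 + (1 - σ⁻¹) * ε) (q + v) (q + w) := by
  have key {v w : E} (h : v ≤ (1 + ε) • w) (hw : q + w ≤ σ • q) :
      q + v ≤ (1 + (1 - σ⁻¹) * ε) • (q + w) := by
    have hq : 0 ≤ ε • (q - σ⁻¹ • (q + w)) :=
      smul_nonneg hε (sub_nonneg.mpr ((inv_smul_le_iff_of_pos hσ).mpr hw))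
    -- By `hw`, the summand `q`, unscaled by `1 + ε`, is at least the fraction `σ⁻¹` of `q + w`.
    calc q + v ≤ q + (1 + ε) • w + ε • (q - σ⁻¹ • (q + w)) :=
          le_add_of_le_of_nonneg (by gcongr) hq
      _ = (1 + (1 - σ⁻¹) * ε) • (q + w) := by module
  exact ⟨key h.1 hw, key h.2 hv⟩

end OrderedModule

variable {A : Type*} [CStarAlgebra A] [PartialOrder A] [StarOrderedRing A]

theorem norm_sub_le {ε : ℝ} {v w M : A} (h : ThompsonLE (1 + ε) v w) (hε : 0 ≤ ε)
    (hv : v ∈ Set.Icc 0 M) (hw : w ∈ Set.Icc 0 M) : ‖v - w‖ ≤ ε * ‖M‖ := by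
  nontriviality A
  have key {v w : A} (hvw : v ≤ (1 + ε) • w) (hw : w ∈ Set.Icc 0 M) :
      v - w ≤ algebraMap ℝ A (ε * ‖M‖) := by
    calc v - w ≤ ε • w := by rw [sub_le_iff_le_add']; simpa only [add_smul, one_smul] using hvw
      _ ≤ ε • algebraMap ℝ A ‖M‖ := smul_le_smul_of_nonneg_left (hw.2.trans
          (IsSelfAdjoint.of_nonneg (hw.1.trans hw.2)).le_algebraMap_norm_self) hε
      _ = algebraMap ℝ A (ε * ‖M‖) := by rw [map_mul, Algebra.smul_def]
  have hsa : IsSelfAdjoint (v - w) :=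
    (IsSelfAdjoint.of_nonneg hv.1).sub (IsSelfAdjoint.of_nonneg hw.1)
  rcases CStarAlgebra.norm_or_neg_norm_mem_spectrum hsa with hmem | hmem
  · exact (le_algebraMap_iff_spectrum_le hsa).mp (key h.1 hw) _ hmem
  · have hmem' : ‖v - w‖ ∈ spectrum ℝ (-(v - w)) := by
      rw [← spectrum.neg_eq]
      simpa only [Set.mem_neg] using hmem
    exact (le_algebraMap_iff_spectrum_le hsa.neg).mp
      (by simpa only [neg_sub] using key h.2 hv) _ hmem'

theorem ringInverse {t : ℝ} {v w : A} (h : ThompsonLE t v w) (ht : 0 < t)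
    (hv : IsStrictlyPositive v) (hw : IsStrictlyPositive w) : ThompsonLE t v⁻¹ʳ w⁻¹ʳ := by
  have key {v w : A} (hv : IsStrictlyPositive v) (h : v ≤ t • w) : w⁻¹ʳ ≤ t • v⁻¹ʳ := by
    have hvt : IsStrictlyPositive (t⁻¹ • v) := hv.smul (inv_pos.mpr ht)
    calc w⁻¹ʳ ≤ (t⁻¹ • v)⁻¹ʳ := CStarAlgebra.ringInverse_le_ringInverse
          ((inv_smul_le_iff_of_pos ht).mpr h) hvt
      _ = t • v⁻¹ʳ := by rw [ringInverse_smul (inv_ne_zero ht.ne') hv.isUnit, inv_inv]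
  exact ⟨key hw h.2, key hv h.1⟩

theorem iterate {K : A → A} {q M : A} {σ : ℝ} (hσ : 1 ≤ σ) (hM : M ≤ σ • q)
    (hF : Set.MapsTo (fun v => q + K v) (Set.Icc q M) (Set.Icc q M))
    (hK : ∀ v ∈ Set.Icc q M, ∀ w ∈ Set.Icc q M, ∀ t, 1 ≤ t → ThompsonLE t v w →
      ThompsonLE t (K v) (K w))
    {v w : A} (hv : v ∈ Set.Icc q M) (hw : w ∈ Set.Icc q M) (n : ℕ) :
    ThompsonLE (1 + (1 - σ⁻¹) ^ n * (σ - 1))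
      ((fun v => q + K v)^[n] v) ((fun v => q + K v)^[n] w) := by
  have hr₀ : 0 ≤ 1 - σ⁻¹ := sub_nonneg.mpr (inv_le_one_of_one_le₀ hσ)
  induction n with
  | zero =>
    simpa using of_mem_Icc (zero_le_one.trans hσ) hM hv hw
  | succ n ih =>
    have hε : 0 ≤ (1 - σ⁻¹) ^ n * (σ - 1) :=
      mul_nonneg (pow_nonneg hr₀ n) (sub_nonneg.mpr hσ)
    have hvn := hF.iterate n hv
    have hwn := hF.iterate n hw
    rw [Function.iterate_succ_apply', Function.iterate_succ_apply', pow_succ', mul_assoc]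
    exact (hK _ hvn _ hwn _ (le_add_of_nonneg_right hε) ih).const_add hε (one_pos.trans_le hσ)
      ((hF hvn).2.trans hM) ((hF hwn).2.trans hM)

end ThompsonLE

theorem existsUnique_eq_add_of_thompsonLE {K : A → A} {q M : A} (hq : IsStrictlyPositive q)
    (hK₀ : ∀ v, q ≤ v → 0 ≤ K v) (hKM : ∀ v, q ≤ v → q + K v ≤ M)
    (hK : ∀ v w, q ≤ v → q ≤ w → ∀ t, 1 ≤ t → ThompsonLE t v w → ThompsonLE t (K v) (K w))
    (hcont : ContinuousOn K (Set.Ici q)) : ∃! v, q ≤ v ∧ v = q + K v := by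
  have hF (v : A) (hv : q ≤ v) : q + K v ∈ Set.Icc q M :=
    ⟨le_add_of_nonneg_right (hK₀ v hv), hKM v hv⟩
  have hqM : q ≤ M := (hF q le_rfl).1.trans (hF q le_rfl).2
  have hmaps : Set.MapsTo (fun v => q + K v) (Set.Icc q M) (Set.Icc q M) := fun v hv => hF v hv.1
  have hIcc : Set.Icc q M ⊆ Set.Icc 0 M := Set.Icc_subset_Icc_left hq.nonneg
  obtain ⟨σ, hσ, hMσ⟩ :=
    exists_le_smul_of_isStrictlyPositive hq (IsSelfAdjoint.of_nonneg (hq.nonneg.trans hqM))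
  have hr₀ : 0 ≤ 1 - σ⁻¹ := sub_nonneg.mpr (inv_le_one_of_one_le₀ hσ)
  have hr : 1 - σ⁻¹ < 1 := sub_lt_self 1 (inv_pos.mpr (one_pos.trans_le hσ))
  have hdist (n : ℕ) (v : A) (hv : v ∈ Set.Icc q M) (w : A) (hw : w ∈ Set.Icc q M) :
      dist ((fun v => q + K v)^[n] v) ((fun v => q + K v)^[n] w) ≤
        (σ - 1) * ‖M‖ * (1 - σ⁻¹) ^ n := by
    rw [dist_eq_norm]
    have hε : 0 ≤ (1 - σ⁻¹) ^ n * (σ - 1) :=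
      mul_nonneg (pow_nonneg hr₀ n) (sub_nonneg.mpr hσ)
    have hn := ThompsonLE.iterate hσ hMσ hmaps (fun v hv w hw => hK v w hv.1 hw.1) hv hw n
    exact (hn.norm_sub_le hε (hIcc (hmaps.iterate n hv)) (hIcc (hmaps.iterate n hw))).trans_eq
      (by ring)
  obtain ⟨v, ⟨hv, hfix⟩, huniq⟩ := existsUnique_isFixedPt_of_dist_iterate_le isClosed_Icc
    ⟨q, le_rfl, hqM⟩ hmaps (continuousOn_const.add (hcont.mono Set.Icc_subset_Ici_self))
    hr₀ hr hdist
  refine ⟨v, ⟨hv.1, hfix.symm⟩, fun w hw => huniq w ⟨?_, hw.2.symm⟩⟩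
  exact hw.2 ▸ hF w hw.1

end Order

section Resolvent

section StarAlgebra

variable {A : Type*} [Ring A] [StarRing A] [Algebra ℂ A] [StarModule ℂ A]

theorem imaginaryPart_ringInverse {z : A} (hz : IsUnit z) :
    (ℑ z⁻¹ʳ : A) = -(z⁻¹ʳ * ℑ z * star z⁻¹ʳ) := by
  have hstar : star z * star z⁻¹ʳ = 1 := by
    rw [← star_mul, Ring.inverse_mul_cancel z hz, star_one]
  simp only [imaginaryPart_apply_coe, mul_smul_comm, smul_mul_assoc, mul_sub, sub_mul,
    Ring.inverse_mul_cancel z hz, one_mul, mul_assoc, hstar, mul_one]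
  module

theorem star_sub_I_smul {y v : A} (hy : IsSelfAdjoint y) (hv : IsSelfAdjoint v) :
    star (y - Complex.I • v) = y + Complex.I • v := by
  rw [star_sub, star_smul, hy.star_eq, hv.star_eq, Complex.star_def, Complex.conj_I, neg_smul,
    sub_neg_eq_add]

end StarAlgebra

variable {A : Type*} [CStarAlgebra A] [PartialOrder A] [StarOrderedRing A] {y v : A}

theorem le_resolventDenom (hy : IsSelfAdjoint y) (hv : IsStrictlyPositive v) :
    v ≤ resolventDenom y v :=
  le_add_of_nonneg_right (hy.conjugate_nonneg hv.ringInverse.nonneg)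

theorem isStrictlyPositive_resolventDenom (hy : IsSelfAdjoint y) (hv : IsStrictlyPositive v) :
    IsStrictlyPositive (resolventDenom y v) :=
  hv.of_le (le_resolventDenom hy hv)

theorem isUnit_sub_I_smul (hy : IsSelfAdjoint y) (hv : IsStrictlyPositive v) :
    IsUnit (y - Complex.I • v) :=
  isUnit_sub_I_smul_of_isUnit_resolventDenom hv.isUnit
    (isStrictlyPositive_resolventDenom hy hv).isUnit

theorem conjugate_ringInverse_sub_I_smul (hy : IsSelfAdjoint y) (hv : IsStrictlyPositive v) :
    (y - Complex.I • v)⁻¹ʳ * v * star (y - Complex.I • v)⁻¹ʳ = (resolventDenom y v)⁻¹ʳ := by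
  have h := sub_smul_mul_inverse_mul_add_smul (c := -Complex.I) (by simp) y hv.isUnit
  rw [neg_smul, sub_neg_eq_add, ← sub_eq_add_neg] at h
  have hz := isUnit_sub_I_smul hy hv
  rw [← h, Ring.inverse_mul (.inr hz), Ring.inverse_mul (.inr hv.isUnit.ringInverse),
    Ring.inverse_inverse hv.isUnit, ← star_sub_I_smul hy hv.isSelfAdjoint, Ring.inverse_star,
    mul_assoc]

theorem star_conjugate_ringInverse_sub_I_smul (hy : IsSelfAdjoint y) (hv : IsStrictlyPositive v) :
    star (y - Complex.I • v)⁻¹ʳ * v * (y - Complex.I • v)⁻¹ʳ = (resolventDenom y v)⁻¹ʳ := by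
  have hz := isUnit_sub_I_smul hy hv
  rw [← sub_smul_mul_inverse_mul_add_smul Complex.I_mul_I y hv.isUnit,
    ← star_sub_I_smul hy hv.isSelfAdjoint, Ring.inverse_mul (.inr hz.star),
    Ring.inverse_mul (.inl hz), Ring.inverse_inverse hv.isUnit, Ring.inverse_star, mul_assoc]

theorem imaginaryPart_ringInverse_sub_I_smul (hy : IsSelfAdjoint y) (hv : IsStrictlyPositive v) :
    (ℑ (y - Complex.I • v)⁻¹ʳ : A) = (resolventDenom y v)⁻¹ʳ := by
  rw [imaginaryPart_ringInverse (isUnit_sub_I_smul hy hv),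
    ← conjugate_ringInverse_sub_I_smul hy hv, map_sub, hy.imaginaryPart, imaginaryPart_I_smul,
    zero_sub]
  simp only [NegMemClass.coe_neg, hv.isSelfAdjoint.coe_realPart, mul_neg, neg_mul, neg_neg]

theorem ThompsonLE.resolventDenom {w : A} {t : ℝ} (h : ThompsonLE t v w) (ht : 0 < t)
    (hy : IsSelfAdjoint y) (hv : IsStrictlyPositive v) (hw : IsStrictlyPositive w) :
    ThompsonLE t (resolventDenom y v) (resolventDenom y w) := by
  have key {v w : A} (h : v ≤ t • w) (hinv : v⁻¹ʳ ≤ t • w⁻¹ʳ) :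
      _root_.resolventDenom y v ≤ t • _root_.resolventDenom y w :=
    calc v + y * v⁻¹ʳ * y ≤ t • w + y * (t • w⁻¹ʳ) * y :=
          add_le_add h (hy.conjugate_le_conjugate hinv)
      _ = t • (w + y * w⁻¹ʳ * y) := by rw [mul_smul_comm, smul_mul_assoc, smul_add]
  have hinv := h.ringInverse ht hv hw
  exact ⟨key h.1 hinv.1, key h.2 hinv.2⟩

theorem continuousAt_ringInverse_resolventDenom (hy : IsSelfAdjoint y)
    (hv : IsStrictlyPositive v) : ContinuousAt (fun v => (resolventDenom y v)⁻¹ʳ) v := by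
  have hinv {u : A} (hu : IsUnit u) : ContinuousAt Ring.inverse u := by
    obtain ⟨u, rfl⟩ := hu
    exact NormedRing.inverse_continuousAt u
  have hdenom : ContinuousAt (resolventDenom y) v :=
    continuousAt_id.add ((continuousAt_const.mul (hinv hv.isUnit)).mul continuousAt_const)
  exact (hinv (isStrictlyPositive_resolventDenom hy hv).isUnit).comp hdenom

end Resolvent

section TwoPositive

open CStarMatrix

theorem isUnit_diagonal {R : Type*} [Ring R] {v w : R} (hv : IsUnit v) (hw : IsUnit w) :
    IsUnit (ofMatrix !![v, 0; 0, w]) := by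
  refine isUnit_iff_exists.mpr ⟨ofMatrix !![v⁻¹ʳ, 0; 0, w⁻¹ʳ], ?_, ?_⟩
  all_goals
    ext i j
    fin_cases i <;> fin_cases j <;>
      simp [mul_apply, Ring.mul_inverse_cancel, Ring.inverse_mul_cancel, hv, hw]

variable {A B : Type*} [CStarAlgebra A] [PartialOrder A] [StarOrderedRing A]
  [CStarAlgebra B] [PartialOrder B] [StarOrderedRing B]

theorem cstarMatrix_apply_self_nonneg {n : Type*} [Fintype n] {M : CStarMatrix n n A} (hM : 0 ≤ M)
    (i : n) : 0 ≤ M i i := by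
  rw [StarOrderedRing.nonneg_iff] at hM
  induction hM using AddSubmonoid.closure_induction with
  | mem M hM =>
    obtain ⟨y, rfl⟩ := hM
    exact Finset.sum_nonneg fun j _ => star_mul_self_nonneg (y j i)
  | zero => exact le_rfl
  | add M N _ _ hM hN => exact add_nonneg hM hN

theorem diagonal_nonneg {v w : A} (hv : 0 ≤ v) (hw : 0 ≤ w) :
    0 ≤ ofMatrix !![v, 0; 0, w] := by
  obtain ⟨x, rfl⟩ := CStarAlgebra.nonneg_iff_eq_star_mul_self.mp hv
  obtain ⟨y, rfl⟩ := CStarAlgebra.nonneg_iff_eq_star_mul_self.mp hw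
  have hsq : ofMatrix !![star x * x, 0; 0, star y * y] =
      star (ofMatrix !![x, 0; 0, y]) * ofMatrix !![x, 0; 0, y] := by
    ext i j
    fin_cases i <;> fin_cases j <;> simp [mul_apply, star_apply]
  exact hsq ▸ star_mul_self_nonneg _

theorem isStrictlyPositive_diagonal {v w : A} (hv : IsStrictlyPositive v)
    (hw : IsStrictlyPositive w) : IsStrictlyPositive (ofMatrix !![v, 0; 0, w]) :=
  IsStrictlyPositive.iff_of_unital.mpr
    ⟨diagonal_nonneg hv.nonneg hw.nonneg, isUnit_diagonal hv.isUnit hw.isUnit⟩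

theorem map_starAlgHom_nonneg (ι : B →⋆ₐ[ℂ] A) {M : CStarMatrix (Fin 2) (Fin 2) B} (hM : 0 ≤ M) :
    0 ≤ M.map ι :=
  map_nonneg (mapₙₐ (ι : B →⋆ₙₐ[ℂ] A)) hM

/-- Positivity of the amplification of `η` to `2 × 2` matrices. -/
def IsTwoPositive (η : A →ₗ[ℂ] B) : Prop :=
  ∀ M : CStarMatrix (Fin 2) (Fin 2) A, 0 ≤ M → 0 ≤ M.map η

namespace IsTwoPositive

variable {η : A →ₗ[ℂ] B}

theorem of_map_star_mul_self
    (hη : ∀ p : Matrix (Fin 2) (Fin 2) A, (∃ y : Matrix (Fin 2) (Fin 2) A, p = star y * y) →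
      ∃ z : Matrix (Fin 2) (Fin 2) B, p.map η = star z * z) : IsTwoPositive η := by
  intro M hM
  rw [StarOrderedRing.nonneg_iff] at hM
  induction hM using AddSubmonoid.closure_induction with
  | mem M hM =>
    obtain ⟨y, rfl⟩ := hM
    obtain ⟨z, hz⟩ := hη _ ⟨y, rfl⟩
    exact (star_mul_self_nonneg (ofMatrix z)).trans_eq hz.symm
  | zero => exact (map_zero (mapₗ η)).ge
  | add M N _ _ hM hN => exact (add_nonneg hM hN).trans_eq (map_add (mapₗ η) M N).symm

theorem map_nonneg (hη : IsTwoPositive η) {x : A} (hx : 0 ≤ x) : 0 ≤ η x :=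
  cstarMatrix_apply_self_nonneg (hη _ (diagonal_nonneg hx le_rfl)) 0

/-- A two-positive map as a positive map. -/
def toPositiveLinearMap (hη : IsTwoPositive η) : A →ₚ[ℂ] B :=
  .mk₀ η fun _ => hη.map_nonneg

/-- The positive map `M ↦ η(K* ι(M) K)` on `2 × 2` matrices over `B`. -/
def conjAmplification (hη : IsTwoPositive η) (ι : B →⋆ₐ[ℂ] A)
    (K : CStarMatrix (Fin 2) (Fin 2) A) :
    CStarMatrix (Fin 2) (Fin 2) B →ₚ[ℂ] CStarMatrix (Fin 2) (Fin 2) B :=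
  .mk₀
    { toFun M := (star K * M.map ι * K).map η
      map_add' M N := by
        have hι : (M + N).map ι = M.map ι + N.map ι := map_add (mapₗ (ι : B →ₗ[ℂ] A)) M N
        rw [hι, mul_add, add_mul]
        exact map_add (mapₗ η) _ _
      map_smul' c M := by
        have hι : (c • M).map ι = c • M.map ι := map_smul (mapₗ (ι : B →ₗ[ℂ] A)) c M
        rw [hι, mul_smul_comm, smul_mul_assoc]
        exact map_smul (mapₗ η) c _ }
    fun M hM => hη _ (star_left_conjugate_nonneg (map_starAlgHom_nonneg ι hM) K)

theorem conjAmplification_diagonal_apply (hη : IsTwoPositive η) (ι : B →⋆ₐ[ℂ] A) (G H : A)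
    (a b c d : B) :
    hη.conjAmplification ι (ofMatrix !![star G, 0; 0, H]) (ofMatrix !![a, b; c, d]) =
      ofMatrix !![η (G * ι a * star G), η (G * ι b * H);
        η (star H * ι c * star G), η (star H * ι d * H)] := by
  change CStarMatrix.map (star (ofMatrix !![star G, 0; 0, H]) *
    CStarMatrix.map (ofMatrix !![a, b; c, d]) ι * ofMatrix !![star G, 0; 0, H]) η = _
  ext i j
  fin_cases i <;> fin_cases j <;> simp [mul_apply, star_apply]

theorem map_star (hη : IsTwoPositive η) (x : A) : η (star x) = star (η x) :=
  StarHomClass.map_star hη.toPositiveLinearMap x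

theorem eq_zero_of_eq_map_mul_mul (hη : IsTwoPositive η) (ι : B →⋆ₐ[ℂ] A) {G H : A} {q v w d : B}
    (hq : IsStrictlyPositive q) (hv : IsStrictlyPositive v) (hw : IsStrictlyPositive w)
    (hvq : v = q + η (G * ι v * star G)) (hwq : w = q + η (star H * ι w * H))
    (hd : d = η (G * ι d * H)) : d = 0 := by
  let Ψ := hη.conjAmplification ι (ofMatrix !![star G, 0; 0, H])
  let D : CStarMatrix (Fin 2) (Fin 2) B := ofMatrix !![v, 0; 0, w]
  let N : CStarMatrix (Fin 2) (Fin 2) B := ofMatrix !![0, d; star d, 0]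
  have hd' : star d = η (star H * ι (star d) * star G) := by
    conv_lhs => rw [hd, ← hη.map_star, star_mul, star_mul, ← StarHomClass.map_star, ← mul_assoc]
  have hD : D = ofMatrix !![q, 0; 0, q] + Ψ D := by
    rw [conjAmplification_diagonal_apply]
    ext i j
    fin_cases i <;> fin_cases j <;> simp [D, ← hvq, ← hwq]
  have hN : IsSelfAdjoint N := by
    ext i j
    fin_cases i <;> fin_cases j <;> simp [N, star_apply]
  have hfix : Ψ N = N := by
    rw [conjAmplification_diagonal_apply, ← hd, ← hd']
    simp only [map_zero, mul_zero, zero_mul, N]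
  have hN₀ : N = 0 := eq_zero_of_positive_map_fixed (isStrictlyPositive_diagonal hv hw)
    (isStrictlyPositive_diagonal hq hq) hD hN hfix
  exact congr_fun (congr_fun hN₀ 0) 1

end IsTwoPositive
end TwoPositive

section Subordination

section StarAlgebra

variable {A B : Type*} [Ring A] [StarRing A] [Algebra ℂ A] [Ring B] [StarRing B] [Algebra ℂ B]
  [StarModule ℂ B]

theorem isSelfAdjoint_sub_map_realPart (ι : B →⋆ₐ[ℂ] A) {X : A} (hX : IsSelfAdjoint X) (w : B) :
    IsSelfAdjoint (X - ι (ℜ w)) :=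
  hX.sub ((ℜ w).prop.map ι)

theorem sub_map_eq_sub_I_smul (ι : B →⋆ₐ[ℂ] A) (X : A) (w : B) :
    X - ι w = X - ι (ℜ w) - Complex.I • ι (ℑ w) := by
  conv_lhs => rw [← realPart_add_I_smul_imaginaryPart w]
  rw [map_add, map_smul, sub_sub]

end StarAlgebra

variable {A B : Type*} [CStarAlgebra A] [PartialOrder A] [StarOrderedRing A]
  [CStarAlgebra B] [PartialOrder B] [StarOrderedRing B]

theorem isStrictlyPositive_map (ι : B →⋆ₐ[ℂ] A) {v : B} (hv : IsStrictlyPositive v) :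
    IsStrictlyPositive (ι v) :=
  IsStrictlyPositive.iff_of_unital.mpr ⟨map_nonneg ι hv.nonneg, hv.isUnit.map ι⟩

theorem existsUnique_eq_add_map_ringInverse_resolventDenom (ι : B →⋆ₐ[ℂ] A) (φ : A →ₚ[ℂ] B) {y : A}
    (hy : IsSelfAdjoint y) {q : B} (hq : IsStrictlyPositive q) :
    ∃! v, q ≤ v ∧ v = q + φ (resolventDenom y (ι v))⁻¹ʳ := by
  have hιpos {v : B} (hv : q ≤ v) : IsStrictlyPositive (ι v) :=
    isStrictlyPositive_map ι (hq.of_le hv)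
  have hdenom {v : B} (hv : q ≤ v) : IsStrictlyPositive (resolventDenom y (ι v)) :=
    isStrictlyPositive_resolventDenom hy (hιpos hv)
  refine existsUnique_eq_add_of_thompsonLE (M := q + φ (ι q)⁻¹ʳ) hq
    (fun v hv => map_nonneg φ (hdenom hv).ringInverse.nonneg) (fun v hv => ?_)
    (fun v w hv hw t ht h => ?_) (fun v hv => ?_)
  · have hle : ι q ≤ resolventDenom y (ι v) :=
      (OrderHomClass.mono ι hv).trans (le_resolventDenom hy (hιpos hv))
    have hinv : (resolventDenom y (ι v))⁻¹ʳ ≤ (ι q)⁻¹ʳ :=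
      CStarAlgebra.ringInverse_le_ringInverse hle (hιpos le_rfl)
    exact add_le_add_right (OrderHomClass.mono φ hinv) q
  · have ht₀ : 0 < t := one_pos.trans_le ht
    exact (((h.map ι).resolventDenom ht₀ hy (hιpos hv) (hιpos hw)).ringInverse ht₀
      (hdenom hv) (hdenom hw)).map φ
  · have hι : Continuous ι := map_continuous ι
    have hφ : Continuous φ := map_continuous φ
    exact (hφ.continuousAt.comp ((continuousAt_ringInverse_resolventDenom hy (hιpos hv)).comp
      hι.continuousAt)).continuousWithinAt

/-- The subordination equation `w = b + η((X - w)⁻¹)` for `w` in the upper half-plane of `B`,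
where `B` acts on `A` through `ι`. -/
def IsSubordinationSolution (ι : B →⋆ₐ[ℂ] A) (X : A) (η : A → B) (b w : B) : Prop :=
  IsStrictlyPositive (ℑ w : B) ∧ w = b + η (X - ι w)⁻¹ʳ

variable {ι : B →⋆ₐ[ℂ] A} {X : A} {b b' w w' : B}

theorem imaginaryPart_map_ringInverse_sub (hX : IsSelfAdjoint X) (φ : A →ₚ[ℂ] B)
    (hw : IsStrictlyPositive (ℑ w : B)) :
    (ℑ (φ (X - ι w)⁻¹ʳ) : B) = φ (resolventDenom (X - ι (ℜ w)) (ι (ℑ w)))⁻¹ʳ := by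
  rw [← map_imaginaryPart, sub_map_eq_sub_I_smul,
    imaginaryPart_ringInverse_sub_I_smul (isSelfAdjoint_sub_map_realPart ι hX w)
      (isStrictlyPositive_map ι hw)]

namespace IsSubordinationSolution

theorem imaginaryPart_eq {φ : A →ₚ[ℂ] B} (h : IsSubordinationSolution ι X φ b w)
    (hX : IsSelfAdjoint X) :
    (ℑ w : B) = ℑ b + φ (resolventDenom (X - ι (ℜ w)) (ι (ℑ w)))⁻¹ʳ := by
  conv_lhs => rw [h.2, map_add, AddSubgroup.coe_add, imaginaryPart_map_ringInverse_sub hX φ h.1]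

theorem imaginaryPart_le {φ : A →ₚ[ℂ] B} (h : IsSubordinationSolution ι X φ b w)
    (hX : IsSelfAdjoint X) : (ℑ b : B) ≤ ℑ w := by
  rw [h.imaginaryPart_eq hX]
  exact le_add_of_nonneg_right (map_nonneg φ (isStrictlyPositive_resolventDenom
    (isSelfAdjoint_sub_map_realPart ι hX w) (isStrictlyPositive_map ι h.1)).ringInverse.nonneg)

theorem eq_of_realPart_eq {φ : A →ₚ[ℂ] B} (h : IsSubordinationSolution ι X φ b w)
    (h' : IsSubordinationSolution ι X φ b' w') (hX : IsSelfAdjoint X)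
    (hb : IsStrictlyPositive (ℑ b : B)) (himag : (ℑ b : B) = ℑ b') (hreal : (ℜ w : B) = ℜ w') :
    b = b' := by
  have huniq := existsUnique_eq_add_map_ringInverse_resolventDenom ι φ
    (isSelfAdjoint_sub_map_realPart ι hX w) hb
  have hw : (ℑ w : B) = ℑ w' :=
    huniq.unique ⟨h.imaginaryPart_le hX, h.imaginaryPart_eq hX⟩
      ⟨himag.trans_le (h'.imaginaryPart_le hX),
        by rw [hreal, himag]; exact h'.imaginaryPart_eq hX⟩
  have hww : w = w' := ComplexStarModule.ext (Subtype.ext hreal) (Subtype.ext hw)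
  calc b = w - φ (X - ι w)⁻¹ʳ := eq_sub_of_add_eq h.2.symm
    _ = w' - φ (X - ι w')⁻¹ʳ := by rw [hww]
    _ = b' := (eq_sub_of_add_eq h'.2.symm).symm

end IsSubordinationSolution

theorem exists_isSubordinationSolution (ι : B →⋆ₐ[ℂ] A) (hX : IsSelfAdjoint X) (φ : A →ₚ[ℂ] B)
    {q s : B} (hq : IsStrictlyPositive q) (hs : IsSelfAdjoint s) :
    ∃ b w, IsSubordinationSolution ι X φ b w ∧ (ℑ b : B) = q ∧ (ℜ w : B) = s := by
  obtain ⟨v, ⟨hqv, hv⟩, -⟩ := existsUnique_eq_add_map_ringInverse_resolventDenom ι φ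
    (hX.sub (hs.map ι)) hq
  have hvpos := hq.of_le hqv
  have hre : (ℜ (s + Complex.I • v) : B) = s := by
    rw [map_add, realPart_I_smul, hvpos.isSelfAdjoint.imaginaryPart, neg_zero, add_zero,
      hs.coe_realPart]
  have him : (ℑ (s + Complex.I • v) : B) = v := by
    rw [map_add, imaginaryPart_I_smul, hs.imaginaryPart, zero_add, hvpos.isSelfAdjoint.coe_realPart]
  have hpos : IsStrictlyPositive (ℑ (s + Complex.I • v) : B) := by rwa [him]
  refine ⟨_, s + Complex.I • v, ⟨hpos, (sub_add_cancel _ _).symm⟩, ?_, hre⟩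
  rw [map_sub, AddSubgroup.coe_sub, imaginaryPart_map_ringInverse_sub hX φ hpos, hre, him]
  exact sub_eq_of_eq_add hv

theorem IsTwoPositive.eq_of_isSubordinationSolution {η : A →ₗ[ℂ] B} (hη : IsTwoPositive η)
    (hX : IsSelfAdjoint X) (hb : IsStrictlyPositive (ℑ b : B))
    (h : IsSubordinationSolution ι X η b w) (h' : IsSubordinationSolution ι X η b w') : w = w' := by
  have hy (u : B) := isSelfAdjoint_sub_map_realPart ι hX u
  have hvq := IsSubordinationSolution.imaginaryPart_eq (φ := hη.toPositiveLinearMap) h hX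
  have hwq := IsSubordinationSolution.imaginaryPart_eq (φ := hη.toPositiveLinearMap) h' hX
  rw [← conjugate_ringInverse_sub_I_smul (hy w) (isStrictlyPositive_map ι h.1),
    ← sub_map_eq_sub_I_smul] at hvq
  rw [← star_conjugate_ringInverse_sub_I_smul (hy w') (isStrictlyPositive_map ι h'.1),
    ← sub_map_eq_sub_I_smul] at hwq
  have hunit {u : B} (hu : IsStrictlyPositive (ℑ u : B)) : IsUnit (X - ι u) := by
    rw [sub_map_eq_sub_I_smul]
    exact isUnit_sub_I_smul (hy u) (isStrictlyPositive_map ι hu)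
  have hd : w - w' = η ((X - ι w)⁻¹ʳ * ι (w - w') * (X - ι w')⁻¹ʳ) :=
    calc w - w' = η ((X - ι w)⁻¹ʳ - (X - ι w')⁻¹ʳ) := by
          conv_lhs => rw [h.2, h'.2, add_sub_add_left_eq_sub, ← map_sub]
      _ = η ((X - ι w)⁻¹ʳ * ι (w - w') * (X - ι w')⁻¹ʳ) := by
          rw [Ring.inverse_sub_inverse (iff_of_true (hunit h.1) (hunit h'.1)),
            sub_sub_sub_cancel_left, ← map_sub]
  exact sub_eq_zero.mp (hη.eq_zero_of_eq_map_mul_mul ι hb h.1 h'.1 hvq hwq hd)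

theorem re_omega_bijective_general (ι : B →⋆ₐ[ℂ] A) (hX : IsSelfAdjoint X) {a₀ : B}
    (ha₀ : IsSelfAdjoint a₀) {η : A →ₗ[ℂ] B} (hη : IsTwoPositive η) {ω : B → B}
    (hω : ∀ b, IsStrictlyPositive (ℑ b : B) → IsSubordinationSolution ι X η (b + a₀) (ω b))
    {q : B} (hq : IsStrictlyPositive q) :
    Set.BijOn (fun u => (ℜ (ω (u + Complex.I • q)) : B))
      {u | IsSelfAdjoint u} {u | IsSelfAdjoint u} := by
  have him {u : B} (hu : IsSelfAdjoint u) : (ℑ (u + Complex.I • q) : B) = q := by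
    rw [map_add, imaginaryPart_I_smul, hu.imaginaryPart, zero_add, hq.isSelfAdjoint.coe_realPart]
  have him₀ {u : B} (hu : IsSelfAdjoint u) : (ℑ (u + Complex.I • q + a₀) : B) = q := by
    rw [add_right_comm, him (hu.add ha₀)]
  have hsub {u : B} (hu : IsSelfAdjoint u) := hω (u + Complex.I • q) ((him hu).symm ▸ hq)
  refine ⟨fun u _ => (ℜ (ω (u + Complex.I • q))).prop, fun u hu u' hu' huu' => ?_, fun s hs => ?_⟩
  · have hb : u + Complex.I • q + a₀ = u' + Complex.I • q + a₀ :=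
      IsSubordinationSolution.eq_of_realPart_eq (φ := hη.toPositiveLinearMap) (hsub hu) (hsub hu')
        hX ((him₀ hu).symm ▸ hq) ((him₀ hu).trans (him₀ hu').symm) huu'
    exact add_right_cancel (add_right_cancel hb)
  · obtain ⟨b, w, hw, hbq, hws⟩ := exists_isSubordinationSolution ι hX hη.toPositiveLinearMap hq hs
    have hu : IsSelfAdjoint ((ℜ b : B) - a₀) := (ℜ b).prop.sub ha₀
    have hb : (ℜ b : B) - a₀ + Complex.I • q + a₀ = b := by
      rw [add_right_comm, sub_add_cancel, ← hbq, realPart_add_I_smul_imaginaryPart]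
    refine ⟨(ℜ b : B) - a₀, hu, ?_⟩
    have hωw : ω ((ℜ b : B) - a₀ + Complex.I • q) = w :=
      hη.eq_of_isSubordinationSolution hX (hbq.symm ▸ hq) (by simpa only [hb] using hsub hu) hw
    exact (congrArg (fun z => (ℜ z : B)) hωw).trans hws

end Subordination

theorem reP_eq_realPart {A : Type*} [NonUnitalRing A] [StarRing A] [Module ℂ A] [StarModule ℂ A]
    (b : A) : reP b = ℜ b := by
  rw [reP, realPart_apply_coe]
  module

theorem imP_eq_imaginaryPart {A : Type*} [NonUnitalRing A] [StarRing A] [Module ℂ A]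
    [StarModule ℂ A] (b : A) : imP b = ℑ b := by
  rw [imP, imaginaryPart_apply_coe, mul_inv, Complex.inv_I]
  module

theorem sPos_iff_isStrictlyPositive {A : Type*} [Ring A] [StarRing A] [PartialOrder A]
    [StarOrderedRing A] {v : A} : SPos v ↔ IsStrictlyPositive v := by
  rw [IsStrictlyPositive.iff_of_unital]
  exact ⟨And.right, fun h => ⟨.of_nonneg h.1, h⟩⟩

/-- Corollary 3.3, first statement: if `η` is continuous and completely
positive (positivity of n×n matrices being expressed via the algebraic characterization
`p ≥ 0 ↔ ∃ y, p = y* y`, valid in any C*-algebra) and `ω` is a self-map of the operator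
upper half-plane of `B` satisfying the subordination equation
`ω(b) = b + a₀ + η((X − ω(b))⁻¹)`, then for every strictly positive `q ∈ B` the map
`u ↦ Re ω(u + iq)` is a bijection of the selfadjoint part of `B` onto itself. -/
theorem re_omega_bijective
    {A B : Type*} [CStarAlgebra A] [PartialOrder A] [StarOrderedRing A]
    [CStarAlgebra B] [PartialOrder B] [StarOrderedRing B]
    (ι : B →⋆ₐ[ℂ] A) (hι : Function.Injective ι)
    (X : A) (hX : IsSelfAdjoint X)
    (a₀ : B) (ha₀ : IsSelfAdjoint a₀)
    (η : A →L[ℂ] B)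
    (hηcp : ∀ n : ℕ, ∀ p : Matrix (Fin n) (Fin n) A, (∃ y : Matrix (Fin n) (Fin n) A, p = star y * y) →
      ∃ z : Matrix (Fin n) (Fin n) B, p.map ⇑η = star z * z)
    (ω : B → B)
    (hω : ∀ b : B, SPos (imP b) →
      SPos (imP (ω b)) ∧ ω b = b + a₀ + η (Ring.inverse (X - ι (ω b)))) :
    ∀ q : B, SPos q →
      Set.BijOn (fun u : B => reP (ω (u + Complex.I • q)))
        {u : B | IsSelfAdjoint u} {u : B | IsSelfAdjoint u} := by
  simp only [sPos_iff_isStrictlyPositive, imP_eq_imaginaryPart, reP_eq_realPart] at hω ⊢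
  exact fun q hq => re_omega_bijective_general ι hX ha₀ (η := (η : A →ₗ[ℂ] B))
    (.of_map_star_mul_self (hηcp 2)) hω hq
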